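/- arXiv:1907.00778 — 2 statements merged into one kernel-verified Lean document; each statement's English description precedes it below -/
import Mathlib

section
/- Suppose there are α_h ∈ (1,2], C_h ∈ [1,∞) and θ_h ∈ (0,∞] such that h(r) ≤ C_h λ^{α_h} h(λr) for all λ ≤ 1 and 0 < r < θ_h. Then there is a constant c > 0, depending only on d, α_h and C_h, such that for all 0 < r < θ_h: |b_r − b| ≤ (c / min{θ_h, 1}) · max{r, r²} · h(r) (where min{θ_h,1} = 1 when θ_h = ∞). -/
/-!
The drift increment `b_r - b` is the integral of `± z` over the shell between radii `r` and `1`.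

For `r ≥ 1`, every `z` in the shell has `‖z‖ ≤ ‖z‖² = r² · min 1 (‖z‖² / r²)`, so the increment is
at most `r² h(r)`.

For `r < 1`, put `R = min θ 1` and take the dyadic radii `2 ^ k * r` for `k ≤ N`, where `2 ^ N * r`
is the last one below `R`. Pointwise on the shell,
`‖z‖ ≤ R⁻¹ ∑_{k ≤ N} 2 (2 ^ k r) min 1 (‖z‖² / (2 ^ k r)²)`
(`shell_norm_mul_le_sum`); the factor `R⁻¹` pays for the `z` beyond the last dyadic radius. After
integration the `k`-th term is at most `2 (2 ^ k r) h(2 ^ k r) ≤ 2 C r (2 ^ (1 - α)) ^ k h(r)` by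
the scaling hypothesis, and the geometric series converges because `α > 1`.
-/

open MeasureTheory Filter Set
open scoped RealInnerProductSpace ENNReal Topology

noncomputable section

abbrev Ed (d : ℕ) := EuclideanSpace ℝ (Fin d)

/-- The concentration function `h`. -/
def concFn (d : ℕ) (A : Ed d →L[ℝ] Ed d) (ν : Measure (Ed d)) (r : ℝ) : ℝ :=
  ‖A‖ / r ^ 2 + ∫ z, min 1 (‖z‖ ^ 2 / r ^ 2) ∂ν

/-- The function `K`. -/
def KFn (d : ℕ) (A : Ed d →L[ℝ] Ed d) (ν : Measure (Ed d)) (r : ℝ) : ℝ :=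
  ‖A‖ / r ^ 2 + (∫ z in {z : Ed d | ‖z‖ < r}, ‖z‖ ^ 2 ∂ν) / r ^ 2

/-- Context hypotheses on the pair `(A, ν)`. -/
structure IsLevyPair (d : ℕ) (A : Ed d →L[ℝ] Ed d) (ν : Measure (Ed d)) : Prop where
  symm : ∀ x y : Ed d, ⟪A x, y⟫ = ⟪x, A y⟫
  nonneg : ∀ x : Ed d, 0 ≤ ⟪x, A x⟫
  nu_zero : ν ({0} : Set (Ed d)) = 0
  nu_int : Integrable (fun z : Ed d => min 1 (‖z‖ ^ 2)) ν
  h_lim : Tendsto (concFn d A ν) (𝓝[>] (0 : ℝ)) atTop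

/-- `g` is the (two-sided) inverse of `f` on `(0,∞)`. -/
structure IsInvOn (f g : ℝ → ℝ) : Prop where
  pos : ∀ u : ℝ, 0 < u → 0 < g u
  right_inv : ∀ u : ℝ, 0 < u → f (g u) = u
  left_inv : ∀ r : ℝ, 0 < r → g (f r) = r

/-- Real part of the characteristic exponent. -/
def rePsi (d : ℕ) (A : Ed d →L[ℝ] Ed d) (ν : Measure (Ed d)) (x : Ed d) : ℝ :=
  ⟪x, A x⟫ + ∫ z, (1 - Real.cos ⟪x, z⟫) ∂ν

/-- The radial non-decreasing majorant ψ*. -/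
def psiStar (d : ℕ) (A : Ed d →L[ℝ] Ed d) (ν : Measure (Ed d)) (r : ℝ) : ℝ :=
  sSup (rePsi d A ν '' Metric.closedBall 0 r)

/-- Condition (C3). -/
def CondC3 (d : ℕ) (A : Ed d →L[ℝ] Ed d) (ν : Measure (Ed d)) (T : ℝ≥0∞) (c α : ℝ) :
    Prop :=
  (∀ x : Ed d, 1 / T < ENNReal.ofReal ‖x‖ → c * psiStar d A ν ‖x‖ ≤ rePsi d A ν x) ∧
    ∀ lam r : ℝ, 1 ≤ lam → 0 < r → 1 / T < ENNReal.ofReal r →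
      c * lam ^ α * psiStar d A ν r ≤ psiStar d A ν (lam * r)

/-- Condition (A1): weak lower scaling of `h` at zero. -/
def ScalA1 (h : ℝ → ℝ) (α C : ℝ) (θ : ℝ≥0∞) : Prop :=
  ∀ lam r : ℝ, 0 < lam → lam ≤ 1 → 0 < r → ENNReal.ofReal r < θ →
    h r ≤ C * lam ^ α * h (lam * r)

/-- The shifted drift `b_r`. -/
def bshift (d : ℕ) (ν : Measure (Ed d)) (b : Ed d) (r : ℝ) : Ed d :=
  b + ∫ z, (Set.indicator {w : Ed d | ‖w‖ < r} (fun w => w) z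
      - Set.indicator {w : Ed d | ‖w‖ < 1} (fun w => w) z) ∂ν

/-- The characteristic exponent of the triplet `(A, ν, b)`. -/
def psiFn (d : ℕ) (A : Ed d →L[ℝ] Ed d) (ν : Measure (Ed d)) (b : Ed d) (x : Ed d) : ℂ :=
  ((⟪x, A x⟫ : ℝ) : ℂ) - Complex.I * ((⟪x, b⟫ : ℝ) : ℂ) -
    ∫ z, (Complex.exp (Complex.I * ((⟪x, z⟫ : ℝ) : ℂ)) - 1 -
      Complex.I * ((⟪x, z⟫ : ℝ) : ℂ)
        * Set.indicator {w : Ed d | ‖w‖ < 1} (fun _ => (1 : ℂ)) z) ∂ν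

/-- The transition density, defined by Fourier inversion. -/
def pdens (d : ℕ) (A : Ed d →L[ℝ] Ed d) (ν : Measure (Ed d)) (b : Ed d)
    (t : ℝ) (x : Ed d) : ℝ :=
  ((2 * Real.pi) ^ d)⁻¹ *
    (∫ z : Ed d, Complex.exp (-(Complex.I * ((⟪x, z⟫ : ℝ) : ℂ))
        - (t : ℂ) * psiFn d A ν b z)).re

/-- The last dyadic multiple of `r` that stays strictly below `R`. -/
lemma exists_last_dyadic {r R : ℝ} (hr : 0 < r) (hrR : r < R) :
    ∃ N : ℕ, 2 ^ N * r < R ∧ R ≤ 2 * (2 ^ N * r) := by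
  have hex : ∃ n : ℕ, R ≤ 2 ^ n * r := by
    obtain ⟨n, hn⟩ := pow_unbounded_of_one_lt (R / r) (one_lt_two (α := ℝ))
    exact ⟨n, ((div_lt_iff₀ hr).1 hn).le⟩
  obtain ⟨m, hm, hmin⟩ := Nat.findX hex
  cases m with
  | zero => simp at hm; linarith
  | succ N => exact ⟨N, not_le.1 (hmin N N.lt_succ_self), by rw [pow_succ] at hm; linarith⟩

lemma integrable_min_one_div {d : ℕ} {ν : Measure (Ed d)}
    (hν : Integrable (fun z : Ed d => min 1 (‖z‖ ^ 2)) ν) {s : ℝ} (hs : 0 < s) :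
    Integrable (fun z : Ed d => min 1 (‖z‖ ^ 2 / s ^ 2)) ν := by
  refine (hν.const_mul (max 1 (1 / s ^ 2))).mono'
    (by fun_prop) (Eventually.of_forall fun z => ?_)
  have h0 : 0 ≤ ‖z‖ ^ 2 := by positivity
  have h1 : (1 : ℝ) ≤ max 1 (1 / s ^ 2) := le_max_left _ _
  have h2 : 1 / s ^ 2 ≤ max 1 (1 / s ^ 2) := le_max_right _ _
  rw [Real.norm_of_nonneg (by positivity)]
  rcases le_total 1 (‖z‖ ^ 2) with h | h
  · rw [min_eq_left h, mul_one]
    exact (min_le_left _ _).trans h1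
  · rw [min_eq_right h]
    refine (min_le_right _ _).trans ?_
    rw [div_eq_mul_one_div, mul_comm]
    exact mul_le_mul_of_nonneg_right h2 h0

lemma integral_min_le_concFn {d : ℕ} (A : Ed d →L[ℝ] Ed d) (ν : Measure (Ed d)) (s : ℝ) :
    ∫ z, min 1 (‖z‖ ^ 2 / s ^ 2) ∂ν ≤ concFn d A ν s :=
  le_add_of_nonneg_left (by positivity)

lemma concFn_nonneg {d : ℕ} (A : Ed d →L[ℝ] Ed d) (ν : Measure (Ed d)) (s : ℝ) :
    0 ≤ concFn d A ν s :=
  (integral_nonneg fun z => by positivity).trans (integral_min_le_concFn A ν s)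

/-- On the shell `r ≤ ‖z‖ < 1` a single dyadic term already dominates `t = ‖z‖`, up to the factor
`R`: the one with `2 ^ k * r ≤ t < 2 ^ (k + 1) * r` when `t` lies below the last dyadic radius, and
the last one otherwise. -/
lemma shell_norm_mul_le_sum {r R t : ℝ} {N : ℕ} (hr : 0 < r) (hR1 : R ≤ 1)
    (hN : R ≤ 2 * (2 ^ N * r)) (hrt : r ≤ t) (ht1 : t < 1) :
    t * R ≤ ∑ k ∈ Finset.range (N + 1), 2 * (2 ^ k * r) * min 1 (t ^ 2 / (2 ^ k * r) ^ 2) := by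
  have ht : 0 < t := hr.trans_le hrt
  have key : ∀ k ∈ Finset.range (N + 1), 2 ^ k * r ≤ t → t * R ≤ 2 * (2 ^ k * r) →
      t * R ≤ ∑ k ∈ Finset.range (N + 1),
        2 * (2 ^ k * r) * min 1 (t ^ 2 / (2 ^ k * r) ^ 2) := by
    intro k hk hkt hle
    refine le_trans ?_ (Finset.single_le_sum
      (f := fun k => 2 * (2 ^ k * r) * min 1 (t ^ 2 / (2 ^ k * r) ^ 2))
      (fun i _ => by positivity) hk)
    have hmin : min 1 (t ^ 2 / (2 ^ k * r) ^ 2) = 1 := by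
      rw [min_eq_left_iff, one_le_div (by positivity)]
      gcongr
    simpa only [hmin, mul_one] using hle
  rcases le_or_gt (2 ^ N * r) t with h | h
  · refine key N (by simp) h ?_
    have : 0 < 2 ^ N * r := by positivity
    rcases le_total R 0 with h0 | h0
    · nlinarith
    · nlinarith
  · obtain ⟨k, hk1, hk2⟩ := exists_nat_pow_near ((one_le_div hr).2 hrt) (one_lt_two (α := ℝ))
    rw [le_div_iff₀ hr] at hk1
    rw [div_lt_iff₀ hr, pow_succ] at hk2
    have hkN : k < N := by
      have h' : (2 : ℝ) ^ k < 2 ^ N := lt_of_mul_lt_mul_right (hk1.trans_lt h) hr.le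
      exact (pow_lt_pow_iff_right₀ one_lt_two).1 h'
    refine key k (Finset.mem_range.2 (by omega)) hk1 ?_
    nlinarith

/-- The integrand of `b_r - b` is supported on the shell between the radii `r` and `1`. -/
lemma norm_indicator_sub_le {d : ℕ} {r : ℝ} {z : Ed d} {G : ℝ} (hG : 0 ≤ G)
    (h1 : r ≤ ‖z‖ → ‖z‖ < 1 → ‖z‖ ≤ G) (h2 : 1 ≤ ‖z‖ → ‖z‖ < r → ‖z‖ ≤ G) :
    ‖Set.indicator {w : Ed d | ‖w‖ < r} (fun w => w) z
      - Set.indicator {w : Ed d | ‖w‖ < 1} (fun w => w) z‖ ≤ G := by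
  by_cases hzr : ‖z‖ < r <;> by_cases hz1 : ‖z‖ < 1 <;>
    simp only [Set.indicator, Set.mem_ofPred_eq, hzr, hz1, if_true, if_false, sub_self, norm_zero,
      sub_zero, zero_sub, norm_neg, hG]
  · exact h2 (not_lt.1 hz1) hzr
  · exact h1 (not_lt.1 hzr) hz1

lemma norm_bshift_sub_le_of_one_le {d : ℕ} (A : Ed d →L[ℝ] Ed d) {ν : Measure (Ed d)} (b : Ed d)
    (hν : Integrable (fun z : Ed d => min 1 (‖z‖ ^ 2)) ν) {r : ℝ} (hr : 1 ≤ r) :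
    ‖bshift d ν b r - b‖ ≤ r ^ 2 * concFn d A ν r := by
  have hr0 : 0 < r := by linarith
  rw [bshift, add_sub_cancel_left]
  refine (norm_integral_le_of_norm_le ((integrable_min_one_div hν hr0).const_mul (r ^ 2))
    (Eventually.of_forall fun z => norm_indicator_sub_le (by positivity)
      (fun h h' => by linarith) fun h h' => ?_)).trans ?_
  · rw [min_eq_right (by rw [div_le_one (by positivity)]; gcongr), mul_div_cancel₀ _ (by positivity)]
    nlinarith
  · rw [integral_const_mul]
    gcongr
    exact integral_min_le_concFn A ν r

/-- The case `r < 1`, for any `R ≤ min θ 1` above `r`. -/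
lemma norm_bshift_sub_le_of_lt_one {d : ℕ} (A : Ed d →L[ℝ] Ed d) {ν : Measure (Ed d)} (b : Ed d)
    (hν : Integrable (fun z : Ed d => min 1 (‖z‖ ^ 2)) ν) {α C r R : ℝ} {θ : ℝ≥0∞}
    (hα : 1 < α) (hC : 1 ≤ C) (hscal : ScalA1 (concFn d A ν) α C θ)
    (hr : 0 < r) (hrR : r < R) (hR1 : R ≤ 1) (hRθ : ENNReal.ofReal R ≤ θ) :
    ‖bshift d ν b r - b‖ ≤
      2 * C / (1 - (2 : ℝ) ^ (1 - α)) / R * (r * concFn d A ν r) := by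
  obtain ⟨N, hN, hN'⟩ := exists_last_dyadic hr hrR
  have hR0 : 0 < R := hr.trans hrR
  have hq0 : 0 < (2 : ℝ) ^ (1 - α) := by positivity
  have hq1 : (2 : ℝ) ^ (1 - α) < 1 :=
    Real.rpow_lt_one_of_one_lt_of_neg one_lt_two (by linarith)
  have hh := concFn_nonneg A ν r
  have hint : ∀ k ∈ Finset.range (N + 1), Integrable
      (fun z : Ed d => 2 * (2 ^ k * r) * min 1 (‖z‖ ^ 2 / (2 ^ k * r) ^ 2)) ν := fun k _ =>
    (integrable_min_one_div hν (by positivity)).const_mul _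
  have hterm : ∀ k ∈ Finset.range (N + 1),
      ∫ z, 2 * (2 ^ k * r) * min 1 (‖z‖ ^ 2 / (2 ^ k * r) ^ 2) ∂ν ≤
        2 * C * (r * concFn d A ν r) * ((2 : ℝ) ^ (1 - α)) ^ k := by
    intro k hk
    have hkN : (2 : ℝ) ^ k * r ≤ 2 ^ N * r := by
      gcongr
      · norm_num
      · exact Nat.lt_succ_iff.1 (Finset.mem_range.1 hk)
    have hs := hscal ((2 ^ k)⁻¹) (2 ^ k * r) (by positivity)
      (inv_le_one_of_one_le₀ (one_le_pow₀ one_le_two)) (by positivity)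
      (((ENNReal.ofReal_lt_ofReal_iff hR0).2 (hkN.trans_lt hN)).trans_le hRθ)
    rw [inv_mul_cancel_left₀ (by positivity)] at hs
    have hpow : (2 : ℝ) ^ k * ((2 ^ k)⁻¹) ^ α = ((2 : ℝ) ^ (1 - α)) ^ k := by
      rw [← Real.rpow_natCast, ← Real.rpow_natCast, ← Real.rpow_neg two_pos.le,
        ← Real.rpow_mul two_pos.le, ← Real.rpow_mul two_pos.le, ← Real.rpow_add two_pos]
      congr 1
      ring
    rw [integral_const_mul]
    calc 2 * (2 ^ k * r) * ∫ z, min 1 (‖z‖ ^ 2 / (2 ^ k * r) ^ 2) ∂ν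
        ≤ 2 * (2 ^ k * r) * (C * ((2 ^ k)⁻¹) ^ α * concFn d A ν r) := by
          gcongr
          exact (integral_min_le_concFn A ν _).trans hs
      _ = 2 * C * (r * concFn d A ν r) * ((2 : ℝ) ^ k * ((2 ^ k)⁻¹) ^ α) := by ring
      _ = _ := by rw [hpow]
  rw [bshift, add_sub_cancel_left]
  refine (norm_integral_le_of_norm_le ((integrable_finsetSum _ hint).div_const R)
    (Eventually.of_forall fun z => norm_indicator_sub_le
      (div_nonneg (Finset.sum_nonneg fun k _ => by positivity) hR0.le)
      (fun h h' => ?_) fun h h' => by linarith)).trans ?_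
  · rw [le_div_iff₀ hR0]
    exact shell_norm_mul_le_sum hr hR1 hN' h h'
  · rw [integral_div, integral_finsetSum _ hint, div_le_iff₀ hR0]
    refine (Finset.sum_le_sum hterm).trans ?_
    rw [← Finset.mul_sum]
    have hgeom : ∑ k ∈ Finset.range (N + 1), ((2 : ℝ) ^ (1 - α)) ^ k ≤
        (1 - (2 : ℝ) ^ (1 - α))⁻¹ := by
      rw [← tsum_geometric_of_lt_one hq0.le hq1]
      exact (summable_geometric_of_lt_one hq0.le hq1).sum_le_tsum _ fun i _ => by positivity
    calc _ ≤ 2 * C * (r * concFn d A ν r) * (1 - (2 : ℝ) ^ (1 - α))⁻¹ := by gcongr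
      _ = _ := by field_simp

theorem stmt_7 (d : ℕ) (hd : 1 ≤ d) (αh Ch : ℝ) (hα : 1 < αh ∧ αh ≤ 2)
    (hC : 1 ≤ Ch) :
    ∃ c : ℝ, 0 < c ∧
      ∀ (A : Ed d →L[ℝ] Ed d) (ν : Measure (Ed d)) (b : Ed d) (θh : ℝ≥0∞),
        IsLevyPair d A ν → 0 < θh → ScalA1 (concFn d A ν) αh Ch θh →
        ∀ r : ℝ, 0 < r → ENNReal.ofReal r < θh →
          ‖bshift d ν b r - b‖ ≤
            c / (if θh = ⊤ then 1 else min θh.toReal 1) *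
              (max r (r ^ 2) * concFn d A ν r) := by
  have hq0 : 0 < (2 : ℝ) ^ (1 - αh) := by positivity
  have hq1 : (2 : ℝ) ^ (1 - αh) < 1 :=
    Real.rpow_lt_one_of_one_lt_of_neg one_lt_two (by linarith [hα.1])
  have hc1 : 1 ≤ 2 * Ch / (1 - (2 : ℝ) ^ (1 - αh)) := by
    rw [one_le_div (by linarith)]
    linarith
  refine ⟨2 * Ch / (1 - (2 : ℝ) ^ (1 - αh)), by linarith, ?_⟩
  intro A ν b θ hL hθ hscal r hr hrθ
  set c := 2 * Ch / (1 - (2 : ℝ) ^ (1 - αh)) with hc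
  set R : ℝ := if θ = ⊤ then 1 else min θ.toReal 1 with hR
  have hR1 : R ≤ 1 := by
    rw [hR]; split_ifs
    · exact le_rfl
    · exact min_le_right _ _
  have hR0 : 0 < R := by
    rw [hR]; split_ifs with h
    · exact one_pos
    · exact lt_min (ENNReal.toReal_pos hθ.ne' h) one_pos
  have hRθ : ENNReal.ofReal R ≤ θ := by
    by_cases h : θ = ⊤
    · rw [h]; exact le_top
    · rw [hR, if_neg h]
      exact ENNReal.ofReal_le_of_le_toReal (min_le_left _ _)
  have hh := concFn_nonneg A ν r
  have hcR : 0 ≤ c / R := div_nonneg (by linarith) hR0.le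
  rcases le_or_gt 1 r with h1 | h1
  · have hcR1 : 1 ≤ c / R := by
      rw [one_le_div hR0]
      linarith
    calc _ ≤ r ^ 2 * concFn d A ν r := norm_bshift_sub_le_of_one_le A b hL.nu_int h1
      _ ≤ max r (r ^ 2) * concFn d A ν r := by gcongr; exact le_max_right _ _
      _ ≤ _ := le_mul_of_one_le_left (by positivity) hcR1
  · have hrR : r < R := by
      rw [hR]; split_ifs with h
      · exact h1
      · exact lt_min ((ENNReal.ofReal_lt_iff_lt_toReal hr.le h).1 hrθ) h1
    refine (norm_bshift_sub_le_of_lt_one A b hL.nu_int hα.1 hC hscal hr hrR hR1 hRθ).trans ?_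
    gcongr
    exact le_max_left _ _


end
end

section
/- Assume condition (C3). Then there is c₂ > 0, depending only on d, α₃ and c₃, such that ∫_{ℝ^d} e^{−t Re ψ(z)} dz ≤ c₂ [h^{-1}(1/t)]^{-d} for all 0 < t < 1/h(T₃) (with 1/h(T₃) read as ∞ when T₃ = ∞). -/
/-!
The integral is controlled by comparing `Re ψ` with a power of `|z|`, at the scale
`r = h⁻¹(1/t)`, where `t h(r) = 1`. The key fact is `concFn_le_psiStar`:
`h(r) ≤ (1 + 15 d) ψ*(1/r)`. For the Gaussian part it holds because the norm of a positive
semidefinite operator is the maximum of its quadratic form on the unit sphere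
(`norm_div_sq_le_psiStar`). For the jump part, `min 1 (|z|²/r²)` is at most the sum over the
coordinates of `min 1 (z_i²/r²)`, each of which is at most `15` times the average of
`1 - cos (s z_i / r)` over `s ∈ (0, 1]` (`min_one_sq_le_avg`); by Fubini's theorem, integrating
in `z` first gives an average of values bounded by `ψ*(1/r)` (`coord_integral_le`).

The restriction on `t` gives `1/r > 1/T₃` (`one_div_lt_of_time`), so for `|z| ≥ 1/r` condition (C3)
yields `t Re ψ(z) ≥ t c₃² (r|z|)^α ψ*(1/r) ≥ b (r|z|)^α` with `b = c₃² / (1 + 15 d)`, while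
`Re ψ ≥ 0` suffices for smaller `z`. Hence `exp (-t Re ψ(z)) ≤ exp (b - b |r z|^α)` for every `z`,
and rescaling `y = r z` produces the factor `r^{-d}`.
-/

open MeasureTheory Filter Set
open scoped RealInnerProductSpace ENNReal Topology

noncomputable section

/-! ### Analytic preliminaries -/

section Aux

variable {d : ℕ} {A : Ed d →L[ℝ] Ed d} {ν : Measure (Ed d)}

lemma one_sub_cos_nonneg (a : ℝ) : 0 ≤ 1 - Real.cos a := by
  linarith [Real.cos_le_one a]

lemma one_sub_cos_inner_le (x z : Ed d) :
    1 - Real.cos ⟪x, z⟫ ≤ 2 * (1 + ‖x‖ ^ 2) * min 1 (‖z‖ ^ 2) := by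
  have h1 := Real.one_sub_sq_div_two_le_cos (x := ⟪x, z⟫)
  have h2 := Real.neg_one_le_cos ⟪x, z⟫
  have h3 : ⟪x, z⟫ ^ 2 ≤ ‖x‖ ^ 2 * ‖z‖ ^ 2 := by
    rw [← mul_pow, ← sq_abs]
    exact pow_le_pow_left₀ (abs_nonneg _) (abs_real_inner_le_norm x z) 2
  rcases le_total 1 (‖z‖ ^ 2) with h | h
  · rw [min_eq_left h]
    nlinarith [sq_nonneg ‖x‖]
  · rw [min_eq_right h]
    nlinarith [sq_nonneg ‖x‖, sq_nonneg ‖z‖, mul_nonneg (sq_nonneg ‖x‖) (sq_nonneg ‖z‖)]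

/-- Averaging `1 - cos (s u)` over `s ∈ (0, 1]` removes the oscillation and leaves a quantity
comparable to `min 1 u²`. -/
lemma min_one_sq_le_avg (u : ℝ) :
    min 1 (u ^ 2) ≤ 15 * ∫ s in Ioc (0 : ℝ) 1, (1 - Real.cos (s * u)) := by
  rw [← intervalIntegral.integral_of_le zero_le_one]
  have hpi := Real.pi_gt_three
  have hpi2 : Real.pi ^ 2 < 10 := by nlinarith [Real.pi_lt_d2]
  rcases le_total |u| Real.pi with h | h
  · have hle : ∫ s in (0 : ℝ)..1, (2 / Real.pi ^ 2 * u ^ 2) * s ^ 2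
        ≤ ∫ s in (0 : ℝ)..1, (1 - Real.cos (s * u)) := by
      refine intervalIntegral.integral_mono_on zero_le_one
        (by apply Continuous.intervalIntegrable; fun_prop)
        (by apply Continuous.intervalIntegrable; fun_prop) fun s hs => ?_
      have hsu : |s * u| ≤ Real.pi := by
        rw [abs_mul, abs_of_nonneg hs.1]
        nlinarith [hs.2, abs_nonneg u]
      have := Real.cos_le_one_sub_mul_cos_sq hsu
      nlinarith [this]
    rw [intervalIntegral.integral_const_mul, integral_pow] at hle
    have h5 : 1 / 5 ≤ 2 / Real.pi ^ 2 := by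
      rw [div_le_div_iff₀ (by norm_num) (by positivity)]; linarith
    refine (min_le_right _ _).trans ?_
    norm_num at hle
    nlinarith [sq_nonneg u]
  · have hu : u ≠ 0 := by
      rintro rfl
      rw [abs_zero] at h
      linarith
    have hval : ∫ s in (0 : ℝ)..1, (1 - Real.cos (s * u)) = 1 - Real.sin u / u := by
      rw [intervalIntegral.integral_sub (by simp)
        (by apply Continuous.intervalIntegrable; fun_prop),
        intervalIntegral.integral_comp_mul_right (fun y => Real.cos y) hu]
      simp [div_eq_inv_mul]
    have hq : Real.sin u / u ≤ 1 / 3 := by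
      refine (le_abs_self _).trans ?_
      rw [abs_div, div_le_div_iff₀ (by linarith) (by norm_num)]
      linarith [Real.abs_sin_le_one u]
    rw [hval]
    refine (min_le_left _ _).trans ?_
    linarith

lemma integrable_exp_neg_mul_norm_rpow (hd : 1 ≤ d) {b α : ℝ} (hb : 0 < b) (hα : 0 < α) :
    Integrable (fun y : Ed d => Real.exp (-b * ‖y‖ ^ α)) := by
  have : Nonempty (Fin d) := ⟨⟨0, hd⟩⟩
  rw [integrable_fun_norm_addHaar volume (f := fun r : ℝ => Real.exp (-b * r ^ α))]
  have h := integrableOn_rpow_mul_exp_neg_mul_rpow (p := α) (s := ((d - 1 : ℕ) : ℝ)) (b := b)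
    (by have : (0 : ℝ) ≤ ((d - 1 : ℕ) : ℝ) := Nat.cast_nonneg _
        linarith) hα hb
  simpa [Real.rpow_natCast] using h

/-- A positive semidefinite symmetric operator whose quadratic form is at most `M` on the unit
sphere has norm at most `M`. -/
lemma opNorm_le_of_form_le (hA : IsLevyPair d A ν) {M : ℝ} (hM : 0 ≤ M)
    (h : ∀ x : Ed d, ⟪x, A x⟫ ≤ M * ‖x‖ ^ 2) : ‖A‖ ≤ M := by
  have hs : (A : Ed d →ₗ[ℝ] Ed d).IsSymmetric := fun x y => hA.symm x y
  rw [ContinuousLinearMap.norm_eq_iSup_rayleighQuotient A hs]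
  refine ciSup_le fun x => ?_
  rw [ContinuousLinearMap.rayleighQuotient, ContinuousLinearMap.reApplyInnerSelf_apply]
  have h0 : 0 ≤ ⟪A x, x⟫ := by rw [real_inner_comm]; exact hA.nonneg x
  have h1 : ⟪A x, x⟫ ≤ M * ‖x‖ ^ 2 := by rw [real_inner_comm]; exact h x
  simp only [RCLike.re_to_real]
  rw [abs_of_nonneg (by positivity)]
  exact div_le_of_le_mul₀ (by positivity) hM h1

/-! ### The concentration function and the majorant -/

/-- `min 1 |z|²` is `ν`-integrable and `ν`-a.e. positive, so `ν` is s-finite; this is what makes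
Fubini's theorem available. -/
lemma sfinite_of_levy (hA : IsLevyPair d A ν) : SFinite ν := by
  set f : Ed d → ℝ≥0∞ := fun z => ENNReal.ofReal (min 1 (‖z‖ ^ 2)) with hf
  have hfm : Measurable f := by fun_prop
  have h0 : ∀ᵐ z ∂ν, f z ≠ 0 := by
    have : ∀ᵐ z ∂ν, z ∉ ({0} : Set (Ed d)) := measure_eq_zero_iff_ae_notMem.1 hA.nu_zero
    filter_upwards [this] with z hz
    have hz' : z ≠ 0 := hz
    have : 0 < ‖z‖ := norm_pos_iff.2 hz'
    simp only [hf, ne_eq, ENNReal.ofReal_eq_zero, not_le]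
    positivity
  have hfin : IsFiniteMeasure (ν.withDensity f) :=
    isFiniteMeasure_withDensity_ofReal hA.nu_int.2
  rw [← withDensity_inv_same hfm h0 (Eventually.of_forall fun z => ENNReal.ofReal_ne_top)]
  infer_instance

lemma integrable_one_sub_cos (hA : IsLevyPair d A ν) (x : Ed d) :
    Integrable (fun z => 1 - Real.cos ⟪x, z⟫) ν := by
  refine (hA.nu_int.const_mul (2 * (1 + ‖x‖ ^ 2))).mono'
    (by fun_prop) (Eventually.of_forall fun z => ?_)
  rw [Real.norm_of_nonneg (one_sub_cos_nonneg _)]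
  exact one_sub_cos_inner_le x z

lemma integrable_min_div (hA : IsLevyPair d A ν) {r : ℝ} (hr : 0 < r) :
    Integrable (fun z => min 1 (‖z‖ ^ 2 / r ^ 2)) ν := by
  refine (hA.nu_int.const_mul (1 + 1 / r ^ 2)).mono'
    (by fun_prop) (Eventually.of_forall fun z => ?_)
  rw [Real.norm_of_nonneg (by positivity)]
  have hi : 0 < 1 / r ^ 2 := by positivity
  rw [div_eq_mul_one_div]
  rcases le_total 1 (‖z‖ ^ 2) with h | h
  · rw [min_eq_left h]
    refine (min_le_left _ _).trans ?_
    linarith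
  · rw [min_eq_right h]
    refine (min_le_right _ _).trans ?_
    nlinarith [sq_nonneg ‖z‖]

lemma concFn_anti (hA : IsLevyPair d A ν) {r s : ℝ} (hr : 0 < r) (hrs : r ≤ s) :
    concFn d A ν s ≤ concFn d A ν r := by
  unfold concFn
  refine add_le_add (by gcongr) (integral_mono (integrable_min_div hA (hr.trans_le hrs))
    (integrable_min_div hA hr) fun z => ?_)
  dsimp only
  gcongr

lemma rePsi_nonneg (hA : IsLevyPair d A ν) (x : Ed d) : 0 ≤ rePsi d A ν x :=
  add_nonneg (hA.nonneg x) (integral_nonneg fun _ => one_sub_cos_nonneg _)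

/-- `Re ψ` is bounded on balls, so the supremum defining `psiStar` is a genuine one. -/
lemma rePsi_le_psiStar (hA : IsLevyPair d A ν) {x : Ed d} {R : ℝ} (hx : ‖x‖ ≤ R) :
    rePsi d A ν x ≤ psiStar d A ν R := by
  refine le_csSup ?_ ⟨x, by simpa using hx, rfl⟩
  refine ⟨‖A‖ * R ^ 2 + 2 * (1 + R ^ 2) * ∫ z, min 1 (‖z‖ ^ 2) ∂ν, ?_⟩
  rintro _ ⟨y, hy, rfl⟩
  have hy : ‖y‖ ≤ R := by simpa using hy
  unfold rePsi
  refine add_le_add ?_ ?_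
  · calc ⟪y, A y⟫ ≤ ‖y‖ * ‖A y‖ := real_inner_le_norm _ _
      _ ≤ ‖y‖ * (‖A‖ * ‖y‖) := by gcongr; exact A.le_opNorm y
      _ = ‖A‖ * ‖y‖ ^ 2 := by ring
      _ ≤ ‖A‖ * R ^ 2 := by gcongr
  · rw [← integral_const_mul]
    refine integral_mono (integrable_one_sub_cos hA y) (hA.nu_int.const_mul _) fun z => ?_
    refine (one_sub_cos_inner_le y z).trans ?_
    gcongr

lemma psiStar_nonneg (hA : IsLevyPair d A ν) {R : ℝ} (hR : 0 ≤ R) : 0 ≤ psiStar d A ν R :=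
  (rePsi_nonneg hA 0).trans (rePsi_le_psiStar hA (by simpa using hR))

lemma norm_div_sq_le_psiStar (hA : IsLevyPair d A ν) {r : ℝ} (hr : 0 < r) :
    ‖A‖ / r ^ 2 ≤ psiStar d A ν (1 / r) := by
  have hP : 0 ≤ psiStar d A ν (1 / r) := psiStar_nonneg hA (by positivity)
  rw [div_le_iff₀ (by positivity)]
  refine opNorm_le_of_form_le hA (by positivity) fun x => ?_
  rcases eq_or_ne x 0 with rfl | hx
  · simp
  have hx' : 0 < ‖x‖ := norm_pos_iff.2 hx
  set k : ℝ := 1 / (r * ‖x‖) with hk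
  have hkp : 0 < k := by positivity
  have h1 : rePsi d A ν (k • x) ≤ psiStar d A ν (1 / r) := by
    refine rePsi_le_psiStar hA ?_
    rw [norm_smul, Real.norm_of_nonneg hkp.le, hk]
    apply le_of_eq
    field_simp
  have h2 : k ^ 2 * ⟪x, A x⟫ ≤ rePsi d A ν (k • x) := by
    unfold rePsi
    have : 0 ≤ ∫ z, (1 - Real.cos ⟪k • x, z⟫) ∂ν :=
      integral_nonneg fun _ => one_sub_cos_nonneg _
    rw [map_smul, real_inner_smul_left, real_inner_smul_right]
    nlinarith
  have h3 : ⟪x, A x⟫ = (k ^ 2 * ⟪x, A x⟫) * (r ^ 2 * ‖x‖ ^ 2) := by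
    rw [hk]; field_simp
  rw [h3, mul_assoc (psiStar d A ν (1 / r))]
  exact mul_le_mul_of_nonneg_right (h2.trans h1) (by positivity)

/-- One coordinate of the Lévy measure part of `h` is dominated by `ψ*`: average `Re ψ` over the
segment from `0` to `e_i / r` and exchange the integrals. -/
lemma coord_integral_le (hA : IsLevyPair d A ν) {r : ℝ} (hr : 0 < r) (i : Fin d) :
    Integrable (fun z : Ed d => min 1 ((z i / r) ^ 2)) ν ∧
    ∫ z, min 1 ((z i / r) ^ 2) ∂ν ≤ 15 * psiStar d A ν (1 / r) := by
  have := sfinite_of_levy hA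
  let e : ℝ → Ed d := fun s => EuclideanSpace.single i (s / r)
  have hin : ∀ s (z : Ed d), ⟪e s, z⟫ = s * (z i / r) := fun s z => by
    simp only [e, EuclideanSpace.inner_single_left]
    simp
    ring
  have hen : ∀ s ∈ Ioc (0 : ℝ) 1, ‖e s‖ ≤ 1 / r := fun s hs => by
    simp only [e, PiLp.norm_single]
    rw [Real.norm_of_nonneg (div_nonneg hs.1.le hr.le)]
    gcongr
    exact hs.2
  have hI1 : Integrable (fun z : Ed d => min 1 ((z i / r) ^ 2)) ν := by
    refine (integrable_min_div hA hr).mono' (by fun_prop) (Eventually.of_forall fun z => ?_)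
    rw [Real.norm_of_nonneg (by positivity), div_pow]
    have : (z i) ^ 2 ≤ ‖z‖ ^ 2 := by
      rw [← sq_abs (z i)]
      exact pow_le_pow_left₀ (abs_nonneg _) (by simpa using PiLp.norm_apply_le z i) 2
    gcongr
  refine ⟨hI1, ?_⟩
  set μ : Measure ℝ := volume.restrict (Ioc (0 : ℝ) 1) with hμ
  have hprod : Integrable (Function.uncurry fun (z : Ed d) (s : ℝ) =>
      1 - Real.cos (s * (z i / r))) (ν.prod μ) := by
    have hdom := (hA.nu_int.const_mul (2 * (1 + (1 / r) ^ 2))).comp_fst μ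
    have hs : ∀ᵐ p ∂(ν.prod μ), p.2 ∈ Ioc (0 : ℝ) 1 :=
      Measure.quasiMeasurePreserving_snd.ae
        (ae_restrict_mem measurableSet_Ioc)
    refine hdom.mono' (by simp only [Function.uncurry_def]; fun_prop) ?_
    filter_upwards [hs] with p hp
    simp only [Function.uncurry]
    rw [Real.norm_of_nonneg (one_sub_cos_nonneg _), ← hin]
    refine (one_sub_cos_inner_le _ _).trans ?_
    have := hen _ hp
    gcongr
  calc ∫ z, min 1 ((z i / r) ^ 2) ∂ν
      ≤ ∫ z, 15 * ∫ s, (1 - Real.cos (s * (z i / r))) ∂μ ∂ν :=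
        integral_mono hI1 (hprod.integral_prod_left.const_mul 15)
          fun z => min_one_sq_le_avg (z i / r)
    _ = 15 * ∫ s, ∫ z, (1 - Real.cos (s * (z i / r))) ∂ν ∂μ := by
        rw [integral_const_mul, integral_integral_swap hprod]
    _ ≤ 15 * ∫ _s, psiStar d A ν (1 / r) ∂μ := by
        gcongr 15 * ?_
        refine integral_mono_ae hprod.integral_prod_right (integrable_const _) ?_
        filter_upwards [ae_restrict_mem (μ := volume) (measurableSet_Ioc (a := (0 : ℝ)) (b := 1))]
          with s hs
        refine le_trans ?_ (rePsi_le_psiStar hA (hen s hs))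
        unfold rePsi
        simp_rw [← hin]
        exact le_add_of_nonneg_left (hA.nonneg (e s))
    _ = 15 * psiStar d A ν (1 / r) := by simp [hμ]

/-- The comparison `h(r) ≤ C ψ*(1/r)`, with `C` depending only on the dimension. -/
lemma concFn_le_psiStar (hA : IsLevyPair d A ν) {r : ℝ} (hr : 0 < r) :
    concFn d A ν r ≤ (1 + 15 * d) * psiStar d A ν (1 / r) := by
  have hpt : ∀ z : Ed d, min 1 (‖z‖ ^ 2 / r ^ 2) ≤ ∑ i, min 1 ((z i / r) ^ 2) := fun z => by
    by_cases h : ∃ i, 1 ≤ (z i / r) ^ 2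
    · obtain ⟨i, hi⟩ := h
      calc min 1 (‖z‖ ^ 2 / r ^ 2) ≤ 1 := min_le_left _ _
        _ = min 1 ((z i / r) ^ 2) := (min_eq_left hi).symm
        _ ≤ _ := Finset.single_le_sum (f := fun i => min 1 ((z i / r) ^ 2))
          (fun j _ => by positivity) (Finset.mem_univ i)
    · push Not at h
      refine (min_le_right _ _).trans (le_of_eq ?_)
      rw [EuclideanSpace.real_norm_sq_eq, Finset.sum_div]
      exact Finset.sum_congr rfl fun i _ => by rw [min_eq_right (h i).le, div_pow]
  have hsum : ∫ z, min 1 (‖z‖ ^ 2 / r ^ 2) ∂ν ≤ d * (15 * psiStar d A ν (1 / r)) := by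
    calc ∫ z, min 1 (‖z‖ ^ 2 / r ^ 2) ∂ν ≤ ∫ z : Ed d, ∑ i, min 1 ((z i / r) ^ 2) ∂ν :=
          integral_mono (integrable_min_div hA hr)
            (integrable_finsetSum _ fun i _ => (coord_integral_le hA hr i).1) hpt
      _ = ∑ i, ∫ z : Ed d, min 1 ((z i / r) ^ 2) ∂ν :=
          integral_finsetSum _ fun i _ => (coord_integral_le hA hr i).1
      _ ≤ ∑ _i : Fin d, 15 * psiStar d A ν (1 / r) :=
          Finset.sum_le_sum fun i _ => (coord_integral_le hA hr i).2
      _ = d * (15 * psiStar d A ν (1 / r)) := by simp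
  have := norm_div_sq_le_psiStar hA hr
  unfold concFn
  linarith

/-! ### The integral bound -/

/-- Under the time restriction, the scale `h⁻¹(1/t)` lies below `T`, i.e. frequencies above its
reciprocal lie in the range where the scaling condition is in force. -/
lemma one_div_lt_of_time {g : ℝ → ℝ} {T : ℝ≥0∞} (hA : IsLevyPair d A ν)
    (hg : IsInvOn (concFn d A ν) g) (hT : 0 < T) {t : ℝ} (ht : 0 < t)
    (hlt : ENNReal.ofReal t < (if T = ⊤ then ⊤
      else ENNReal.ofReal (1 / concFn d A ν T.toReal))) :
    1 / T < ENNReal.ofReal (1 / g (1 / t)) := by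
  have hr : 0 < g (1 / t) := hg.pos _ (by positivity)
  by_cases hTop : T = ⊤
  · subst hTop
    simpa using hr
  rw [if_neg hTop] at hlt
  have hT' : 0 < T.toReal := ENNReal.toReal_pos hT.ne' hTop
  have hlt' : t < 1 / concFn d A ν T.toReal := (ENNReal.ofReal_lt_ofReal_iff_of_nonneg ht.le).1 hlt
  have hh : 0 < concFn d A ν T.toReal := one_div_pos.1 (ht.trans hlt')
  have hlt2 : g (1 / t) < T.toReal := by
    by_contra! hcon
    have h1 := concFn_anti hA hT' hcon
    rw [hg.right_inv _ (by positivity)] at h1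
    rw [lt_div_iff₀ hh] at hlt'
    rw [div_le_iff₀ ht] at h1
    linarith
  have : 1 / T = ENNReal.ofReal (1 / T.toReal) := by
    rw [one_div, one_div, ENNReal.ofReal_inv_of_pos hT', ENNReal.ofReal_toReal hTop]
  rw [this]
  exact (ENNReal.ofReal_lt_ofReal_iff (by positivity)).2 (one_div_lt_one_div_of_lt hr hlt2)

end Aux

theorem stmt_11 (d : ℕ) (hd : 1 ≤ d) (α3 c3 : ℝ) (hα : 0 < α3 ∧ α3 ≤ 2)
    (hc : 0 < c3 ∧ c3 ≤ 1) :
    ∃ c2 : ℝ, 0 < c2 ∧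
      ∀ (A : Ed d →L[ℝ] Ed d) (ν : Measure (Ed d)) (hinv : ℝ → ℝ) (T3 : ℝ≥0∞),
        IsLevyPair d A ν → IsInvOn (concFn d A ν) hinv → 0 < T3 →
        CondC3 d A ν T3 c3 α3 →
        ∀ t : ℝ, 0 < t →
          ENNReal.ofReal t <
            (if T3 = ⊤ then ⊤
             else ENNReal.ofReal (1 / concFn d A ν T3.toReal)) →
          (∫ z : Ed d, Real.exp (-(t * rePsi d A ν z))) ≤
            c2 * hinv (1 / t) ^ (-(d : ℤ)) := by
  have hα0 := hα.1
  have hc0 := hc.1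
  -- The exponent constant: two factors `c3` from the two parts of (C3), and `1 + 15 d` from
  -- `concFn_le_psiStar`.
  set b : ℝ := c3 ^ 2 / (1 + 15 * d) with hb
  have hbp : 0 < b := by positivity
  have hint := integrable_exp_neg_mul_norm_rpow hd hbp hα0
  set I : ℝ := ∫ y : Ed d, Real.exp (-b * ‖y‖ ^ α3) with hI
  have hI0 : 0 ≤ I := integral_nonneg fun _ => (Real.exp_pos _).le
  refine ⟨Real.exp b * I + 1, by positivity, ?_⟩
  intro A ν g T hA hg hT hC t ht hlt
  have hrT := one_div_lt_of_time hA hg hT ht hlt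
  have hhr := hg.right_inv (1 / t) (by positivity)
  have hr : 0 < g (1 / t) := hg.pos _ (by positivity)
  set r := g (1 / t) with hrdef
  have hcomp := concFn_le_psiStar hA hr
  rw [hhr, div_le_iff₀ ht] at hcomp
  have hpt : ∀ z : Ed d, Real.exp (-(t * rePsi d A ν z))
      ≤ Real.exp b * Real.exp (-b * ‖r • z‖ ^ α3) := fun z => by
    rw [← Real.exp_add]
    refine Real.exp_le_exp.2 ?_
    have hnorm : ‖r • z‖ = r * ‖z‖ := by rw [norm_smul, Real.norm_of_nonneg hr.le]
    rw [hnorm]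
    have hψ := rePsi_nonneg hA z
    rcases le_total (r * ‖z‖) 1 with h | h
    · have h1 : (r * ‖z‖) ^ α3 ≤ 1 := Real.rpow_le_one (by positivity) h hα0.le
      have h2 : 0 ≤ t * rePsi d A ν z := by positivity
      nlinarith
    · have hz : 1 / r ≤ ‖z‖ := by rw [div_le_iff₀ hr]; linarith
      have h1 := hC.1 z (hrT.trans_le (ENNReal.ofReal_le_ofReal hz))
      have h2 := hC.2 (r * ‖z‖) (1 / r) h (by positivity) hrT
      have h3 : r * ‖z‖ * (1 / r) = ‖z‖ := by field_simp
      rw [h3] at h2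
      have hL : 0 ≤ (r * ‖z‖) ^ α3 := by positivity
      have h4 : b * (r * ‖z‖) ^ α3 ≤ t * rePsi d A ν z := by
        calc b * (r * ‖z‖) ^ α3 = b * (r * ‖z‖) ^ α3 * 1 := by ring
          _ ≤ b * (r * ‖z‖) ^ α3 * ((1 + 15 * d) * psiStar d A ν (1 / r) * t) := by gcongr
          _ = t * (c3 * (c3 * (r * ‖z‖) ^ α3 * psiStar d A ν (1 / r))) := by
            rw [hb]; field_simp
          _ ≤ t * (c3 * psiStar d A ν ‖z‖) := by gcongr
          _ ≤ t * rePsi d A ν z := by gcongr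
      linarith
  calc ∫ z : Ed d, Real.exp (-(t * rePsi d A ν z))
      ≤ ∫ z : Ed d, Real.exp b * Real.exp (-b * ‖r • z‖ ^ α3) :=
        integral_mono_of_nonneg (Eventually.of_forall fun _ => (Real.exp_pos _).le)
          ((hint.comp_smul hr.ne').const_mul _) (Eventually.of_forall hpt)
    _ = Real.exp b * I * r ^ (-(d : ℤ)) := by
        rw [integral_const_mul,
          Measure.integral_comp_smul volume (fun y : Ed d => Real.exp (-b * ‖y‖ ^ α3)) r,
          finrank_euclideanSpace_fin, abs_of_nonneg (by positivity), zpow_neg, zpow_natCast,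
          smul_eq_mul, ← hI]
        ring
    _ ≤ (Real.exp b * I + 1) * r ^ (-(d : ℤ)) := by
        gcongr
        linarith

end
end
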